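/- arXiv:1505.08015 — 2 statements merged into one kernel-verified Lean document; each statement's English description precedes it below -/
import Mathlib

section
/- The test function f is integrable on ℝ and ∫_ℝ f(x) dx = 1. -/
open MeasureTheory

/-- The test function `f(x) = (1/(2π))·sin²(x/2)/(x/2)²` for `x ≠ 0`, with `f(0) = 1/(2π)`. -/
noncomputable def f (x : ℝ) : ℝ :=
  if x = 0 then 1 / (2 * Real.pi)
  else (1 / (2 * Real.pi)) * Real.sin (x / 2) ^ 2 / (x / 2) ^ 2

open scoped FourierTransform in
theorem tri_fourier (g : ℝ → ℂ) (hg : g = fun t : ℝ => ((max 0 (1 - |t|) : ℝ) : ℂ)) (ξ : ℝ)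
    (hξ : ξ ≠ 0) : 𝓕 g ξ = ((2 * Real.pi * f (2 * Real.pi * ξ) : ℝ) : ℂ) := by
  have hpi := Real.pi_ne_zero
  rw [Real.fourier_real_eq_integral_exp_smul]
  set c : ℂ := ((-2 * Real.pi * ξ : ℝ) : ℂ) * Complex.I with hc
  have hc0 : c ≠ 0 := by
    rw [hc]
    simp [hpi, hξ]
  have e1 : ∀ v : ℝ, Complex.exp (((-2 * Real.pi * v * ξ : ℝ) : ℂ) * Complex.I) • g v
      = g v * Complex.exp (c * v) := by
    intro v
    rw [smul_eq_mul, mul_comm, hc]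
    congr 2
    push_cast
    ring
  simp_rw [e1]
  have hgc : Continuous g := by
    rw [hg]; fun_prop
  have hcont : Continuous (fun v : ℝ => g v * Complex.exp (c * v)) := by fun_prop
  have e2 : ∫ v : ℝ, g v * Complex.exp (c * v) = ∫ v in (-1:ℝ)..1, g v * Complex.exp (c * v) := by
    symm
    apply intervalIntegral.integral_eq_integral_of_support_subset
    intro v hv
    rw [Function.mem_support] at hv
    by_contra h
    apply hv
    have h1 : 1 - |v| ≤ 0 := by
      by_contra h2
      have h3 : |v| < 1 := by linarith
      exact h ⟨(abs_lt.1 h3).1, (abs_lt.1 h3).2.le⟩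
    simp [hg, max_eq_left h1]
  rw [e2, ← intervalIntegral.integral_add_adjacent_intervals (b := 0)
    (hcont.intervalIntegrable _ _) (hcont.intervalIntegrable _ _)]
  have hE : ∀ x : ℝ, HasDerivAt (fun t : ℝ => Complex.exp (c * t)) (Complex.exp (c * x) * c) x := by
    intro x
    have := ((hasDerivAt_id (x:ℂ)).const_mul c).cexp.comp_ofReal
    simpa using this
  have hI : ∀ x : ℝ, HasDerivAt (fun t : ℝ => (t : ℂ)) 1 x := fun x => Complex.ofRealCLM.hasDerivAt
  have i1 : ∫ v in (-1:ℝ)..0, g v * Complex.exp (c * v)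
      = 1 / c - 1 / c ^ 2 + Complex.exp (-c) / c ^ 2 := by
    have : ∫ v in (-1:ℝ)..0, g v * Complex.exp (c * v)
        = ∫ v in (-1:ℝ)..0, (1 + (v:ℂ)) * Complex.exp (c * v) := by
      apply intervalIntegral.integral_congr
      intro v hv
      rw [Set.uIcc_of_le (by norm_num)] at hv
      have h1 : max 0 (1 - |v|) = 1 + v := by
        rw [abs_of_nonpos hv.2, max_eq_right] <;> linarith [hv.1]
      simp [hg, h1]
    rw [this, intervalIntegral.integral_eq_sub_of_hasDerivAt
      (f := fun t : ℝ => (1 + (t:ℂ)) * Complex.exp (c * t) / c - Complex.exp (c * t) / c ^ 2)]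
    · simp
      try ring
    · intro x _
      refine (((((hI x).const_add 1).mul (hE x)).div_const c).sub
        ((hE x).div_const (c ^ 2))).congr_deriv ?_
      field_simp
      ring
    · exact Continuous.intervalIntegrable (by fun_prop) _ _
  have i2 : ∫ v in (0:ℝ)..1, g v * Complex.exp (c * v)
      = Complex.exp c / c ^ 2 - 1 / c - 1 / c ^ 2 := by
    have : ∫ v in (0:ℝ)..1, g v * Complex.exp (c * v)
        = ∫ v in (0:ℝ)..1, (1 - (v:ℂ)) * Complex.exp (c * v) := by
      apply intervalIntegral.integral_congr
      intro v hv
      rw [Set.uIcc_of_le (by norm_num)] at hv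
      have h1 : max 0 (1 - |v|) = 1 - v := by
        rw [abs_of_nonneg hv.1, max_eq_right]; linarith [hv.2]
      simp [hg, h1]
    rw [this, intervalIntegral.integral_eq_sub_of_hasDerivAt
      (f := fun t : ℝ => (1 - (t:ℂ)) * Complex.exp (c * t) / c + Complex.exp (c * t) / c ^ 2)]
    · simp
      try ring
    · intro x _
      refine (((((hI x).const_sub 1).mul (hE x)).div_const c).add
        ((hE x).div_const (c ^ 2))).congr_deriv ?_
      field_simp
      ring
    · exact Continuous.intervalIntegrable (by fun_prop) _ _
  rw [i1, i2]
  have hsum : Complex.exp c + Complex.exp (-c) = 2 - 4 * ((Real.sin (Real.pi * ξ) ^ 2 : ℝ) : ℂ) := by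
    have h1 : Complex.exp c + Complex.exp (-c) = 2 * Complex.cos ((-2 * Real.pi * ξ : ℝ) : ℂ) := by
      rw [Complex.two_cos, hc, ← neg_mul]
    have h2 : Real.cos (-2 * Real.pi * ξ) = 1 - 2 * Real.sin (Real.pi * ξ) ^ 2 := by
      rw [show -2 * Real.pi * ξ = -(2 * (Real.pi * ξ)) by ring, Real.cos_neg, Real.cos_two_mul,
        Real.cos_sq']
      ring
    rw [h1, ← Complex.ofReal_cos, h2]
    push_cast
    ring
  have hc2 : c ^ 2 = -((4 * (Real.pi * ξ) ^ 2 : ℝ) : ℂ) := by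
    rw [hc, mul_pow, Complex.I_sq]
    push_cast
    ring
  have hf : 2 * Real.pi * f (2 * Real.pi * ξ) = Real.sin (Real.pi * ξ) ^ 2 / (Real.pi * ξ) ^ 2 := by
    rw [f, if_neg (by simp [hpi, hξ]), show 2 * Real.pi * ξ / 2 = Real.pi * ξ by ring]
    field_simp
  have : 1 / c - 1 / c ^ 2 + Complex.exp (-c) / c ^ 2
      + (Complex.exp c / c ^ 2 - 1 / c - 1 / c ^ 2)
      = (Complex.exp c + Complex.exp (-c) - 2) / c ^ 2 := by ring
  rw [this, hsum, hc2, hf]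
  have hpc : (Real.pi : ℂ) ≠ 0 := by exact_mod_cast hpi
  have hxc : (ξ : ℂ) ≠ 0 := by exact_mod_cast hξ
  push_cast
  field_simp
  ring

theorem f_integrable : Integrable f := by
  have hpi := Real.pi_pos
  have hm : Measurable f := by
    unfold f
    exact Measurable.ite (measurableSet_singleton 0) measurable_const (by fun_prop)
  refine (integrable_inv_one_add_sq.const_mul (4 / Real.pi)).mono' hm.aestronglyMeasurable ?_
  have h0 : ∀ᵐ x : ℝ, x ≠ 0 := by simp [ae_iff]
  filter_upwards [h0] with x hx
  rw [f, if_neg hx, Real.norm_of_nonneg (by positivity)]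
  have h1 := Real.sin_sq_le_one (x / 2)
  have h2 : Real.sin (x / 2) ^ 2 ≤ (x / 2) ^ 2 := sq_le_sq.2 Real.abs_sin_le_abs
  rw [show 1 / (2 * Real.pi) * Real.sin (x / 2) ^ 2 / (x / 2) ^ 2
    = (2 / Real.pi) * (Real.sin (x / 2) ^ 2 / x ^ 2) by field_simp; try ring,
    show 4 / Real.pi * (1 + x ^ 2)⁻¹ = (2 / Real.pi) * (2 / (1 + x ^ 2)) by field_simp; try ring]
  refine mul_le_mul_of_nonneg_left ?_ (by positivity)
  rw [div_le_div_iff₀ (by positivity) (by positivity)]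
  nlinarith [mul_le_mul_of_nonneg_right h1 (sq_nonneg x)]

open scoped FourierTransform in
theorem f_integrable_integral_one :
    Integrable f ∧ ∫ x : ℝ, f x = 1 := by
  refine ⟨f_integrable, ?_⟩
  have hpi := Real.pi_pos
  set g : ℝ → ℂ := fun t : ℝ => ((max 0 (1 - |t|) : ℝ) : ℂ) with hg
  have hgc : Continuous g := by
    rw [hg]; fun_prop
  have hgi : Integrable g := by
    apply hgc.integrable_of_hasCompactSupport
    apply HasCompactSupport.intro (isCompact_Icc (a := (-1:ℝ)) (b := 1))
    intro v hv
    have h1 : 1 - |v| ≤ 0 := by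
      by_contra h2
      have h3 : |v| ≤ 1 := by linarith
      exact hv (abs_le.1 h3)
    simp [hg, max_eq_left h1]
  have h0 : ∀ᵐ x : ℝ, x ≠ 0 := by simp [ae_iff]
  have hae : 𝓕 g =ᵐ[volume] fun ξ => ((2 * Real.pi * f (2 * Real.pi * ξ) : ℝ) : ℂ) := by
    filter_upwards [h0] with x hx using tri_fourier g hg x hx
  have hi : Integrable (𝓕 g) := by
    rw [integrable_congr hae]
    exact ((f_integrable.comp_mul_left' (by positivity)).const_mul _).ofReal
  have key := congrFun (hgc.fourierInv_fourier_eq hgi hi) 0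
  rw [Real.fourierInv_eq'] at key
  simp only [inner_zero_right, mul_zero, Complex.ofReal_zero, zero_mul, Complex.exp_zero,
    one_smul] at key
  rw [integral_congr_ae hae, integral_complex_ofReal, integral_const_mul,
    Measure.integral_comp_mul_left, abs_of_pos (by positivity)] at key
  have h3 : g 0 = ((1 : ℝ) : ℂ) := by simp [hg]
  rw [h3] at key
  have := Complex.ofReal_injective key
  rw [smul_eq_mul] at this
  rw [← this]
  field_simp
end

section
/- For any sequence c : ℕ → ℝ (with indexing starting at 1), all terms of the series Σ_{n≥1} c(n)·n^{−1/2}·f̂(log(n)/(2π)) with n ≠ 1, 2 vanish, the series converges absolutely, and its sum equals c(1) + c(2)·(1 − log 2)/√2. -/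
open MeasureTheory

/-- The Fourier transform `f̂(ξ) = ∫_ℝ f(u)·e^{−2πiuξ} du`. -/
noncomputable def fhat (ξ : ℝ) : ℂ :=
  ∫ u : ℝ, (f u : ℂ) * Complex.exp (-(2 * Real.pi * Complex.I * u * ξ))

/-- The `n`-th term `c(n)·n^{−1/2}·f̂(log n/(2π))` of the sum over primes in the
explicit formula, for the test function `f`. -/
noncomputable def term (c : ℕ → ℝ) (n : ℕ) : ℂ :=
  ((c n / Real.sqrt n : ℝ) : ℂ) * fhat (Real.log n / (2 * Real.pi))

open FourierTransform in
theorem tent_fourier (w : ℝ) (hw : w ≠ 0) :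
    (∫ x : ℝ, Complex.exp (↑(-2 * Real.pi * x * w) * Complex.I) • ((max 0 (1 - |x|) : ℝ) : ℂ))
      = ((Real.sin (Real.pi * w) ^ 2 / (Real.pi * w) ^ 2 : ℝ) : ℂ) := by
  set a : ℂ := -2 * Real.pi * w * Complex.I with ha
  have hπ : (Real.pi : ℂ) ≠ 0 := by exact_mod_cast Real.pi_ne_zero
  have hwc : (w : ℂ) ≠ 0 := by exact_mod_cast hw
  have ha0 : a ≠ 0 := by simp [ha, hπ, hwc]
  have key : ∀ b : ℂ, b ≠ 0 → ∫ x in (0:ℝ)..1, (1 - (x:ℂ)) * Complex.exp (b * x)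
      = Complex.exp b / b^2 - 1 / b - 1 / b^2 := by
    intro b hb
    have hd : ∀ x ∈ Set.uIcc (0:ℝ) 1, HasDerivAt
        (fun x : ℝ => (1 - (x:ℂ)) * Complex.exp (b * x) / b + Complex.exp (b * x) / b^2)
        ((1 - (x:ℂ)) * Complex.exp (b * x)) x := by
      intro x _
      have h1 : HasDerivAt (fun x : ℝ => (x:ℂ)) 1 x := Complex.ofRealCLM.hasDerivAt
      have h2 : HasDerivAt (fun x : ℝ => Complex.exp (b * x)) (Complex.exp (b * x) * (b * 1)) x :=
        (h1.const_mul b).cexp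
      have h3 := (((h1.const_sub 1).mul h2).div_const b).add (h2.div_const (b^2))
      refine h3.congr_deriv ?_
      field_simp
      ring
    rw [intervalIntegral.integral_eq_sub_of_hasDerivAt hd
      (Continuous.intervalIntegrable (by fun_prop) _ _)]
    simp
    ring
  have hsupp : (∫ x : ℝ, Complex.exp (↑(-2 * Real.pi * x * w) * Complex.I) •
      ((max 0 (1 - |x|) : ℝ) : ℂ)) = ∫ x in (-1:ℝ)..1,
      Complex.exp (↑(-2 * Real.pi * x * w) * Complex.I) • ((max 0 (1 - |x|) : ℝ) : ℂ) := by
    symm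
    apply intervalIntegral.integral_eq_integral_of_support_subset
    intro x hx
    by_contra hn
    apply hx
    have : 1 ≤ |x| := by
      by_contra h
      have := abs_lt.1 (not_le.1 h)
      exact hn ⟨this.1, this.2.le⟩
    have : max 0 (1 - |x|) = 0 := max_eq_left (by linarith)
    simp [this]
  have hc : Continuous (fun x : ℝ => Complex.exp (↑(-2 * Real.pi * x * w) * Complex.I) •
      ((max 0 (1 - |x|) : ℝ) : ℂ)) := by fun_prop
  rw [hsupp, ← intervalIntegral.integral_add_adjacent_intervals (b := 0)
    (hc.intervalIntegrable _ _) (hc.intervalIntegrable _ _)]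
  have hL : ∫ x in (-1:ℝ)..0, Complex.exp (↑(-2 * Real.pi * x * w) * Complex.I) •
      ((max 0 (1 - |x|) : ℝ) : ℂ) = ∫ x in (0:ℝ)..1, (1 - (x:ℂ)) * Complex.exp (-a * x) := by
    rw [show (-1:ℝ) = -1 from rfl, ← neg_zero (G := ℝ), ← intervalIntegral.integral_comp_neg]
    simp only [neg_zero]
    apply intervalIntegral.integral_congr
    intro x hx
    rw [Set.uIcc_of_le zero_le_one] at hx
    have : max 0 (1 - |x|) = 1 - x := by
      rw [abs_of_nonneg hx.1]; exact max_eq_right (by linarith [hx.2])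
    simp only [abs_neg, this, smul_eq_mul, ha]
    push_cast
    rw [mul_comm]
    congr 2
    ring
  have hR : ∫ x in (0:ℝ)..1, Complex.exp (↑(-2 * Real.pi * x * w) * Complex.I) •
      ((max 0 (1 - |x|) : ℝ) : ℂ) = ∫ x in (0:ℝ)..1, (1 - (x:ℂ)) * Complex.exp (a * x) := by
    apply intervalIntegral.integral_congr
    intro x hx
    rw [Set.uIcc_of_le zero_le_one] at hx
    have : max 0 (1 - |x|) = 1 - x := by
      rw [abs_of_nonneg hx.1]; exact max_eq_right (by linarith [hx.2])
    simp only [this, smul_eq_mul, ha]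
    push_cast
    rw [mul_comm]
    congr 2
    ring
  rw [hL, hR, key _ ha0, key _ (neg_ne_zero.2 ha0)]
  have hs : Complex.exp a + Complex.exp (-a) = 2 - 4 * Complex.sin (Real.pi * w) ^ 2 := by
    have h1 : Complex.exp a + Complex.exp (-a) = 2 * Complex.cos (2 * (Real.pi * w)) := by
      rw [Complex.two_cos, add_comm]
      congr 2 <;> rw [ha] <;> ring
    rw [h1, Complex.cos_two_mul, Complex.cos_sq']
    ring
  have ha2 : a ^ 2 = -4 * (Real.pi * w) ^ 2 := by
    rw [ha]; ring_nf; rw [Complex.I_sq]; ring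
  have : Complex.exp (-a) / (-a)^2 - 1 / (-a) - 1 / (-a)^2 +
      (Complex.exp a / a^2 - 1 / a - 1 / a^2) = (Complex.exp a + Complex.exp (-a) - 2) / a^2 := by
    field_simp
    ring
  rw [this, hs, ha2]
  push_cast
  field_simp
  ring

theorem f_bound (x : ℝ) : ‖f x‖ ≤ 5 * (1 + x ^ 2)⁻¹ := by
  have hπ := Real.pi_gt_three
  unfold f
  split_ifs with h
  · subst h
    rw [Real.norm_of_nonneg (by positivity), div_le_iff₀ (by positivity)]
    norm_num; linarith
  · have h1 : Real.sin (x/2) ^ 2 ≤ (x/2)^2 := by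
      rw [sq_le_sq]; exact Real.abs_sin_le_abs
    have h2 := Real.sin_sq_le_one (x/2)
    have hx : 0 < (x/2)^2 := by positivity
    rw [Real.norm_of_nonneg (by positivity), mul_div_assoc]
    have h3 : 1 / (2 * Real.pi) ≤ 1 := by
      rw [div_le_iff₀ (by positivity)]; linarith
    have h4 : Real.sin (x/2) ^ 2 / (x/2)^2 ≤ 5 * (1 + x^2)⁻¹ := by
      rw [← div_eq_mul_inv, div_le_div_iff₀ hx (by positivity)]
      nlinarith [sq_nonneg x]
    calc _ ≤ 1 * (Real.sin (x/2) ^ 2 / (x/2)^2) := by gcongr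
      _ ≤ _ := by linarith

noncomputable def tent (x : ℝ) : ℂ := ((max 0 (1 - |x|) : ℝ) : ℂ)

theorem tent_cont : Continuous tent := by unfold tent; fun_prop

theorem tent_integrable : Integrable tent := by
  refine tent_cont.integrable_of_hasCompactSupport ?_
  refine HasCompactSupport.intro (isCompact_Icc (a := (-1:ℝ)) (b := 1)) ?_
  intro x hx
  have : 1 ≤ |x| := by
    by_contra h
    have := abs_lt.1 (not_le.1 h)
    exact hx ⟨this.1.le, this.2.le⟩
  have : max 0 (1 - |x|) = 0 := max_eq_left (by linarith)
  simp [tent, this]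

open FourierTransform in
theorem fourier_tent (w : ℝ) (hw : w ≠ 0) :
    𝓕 tent w = ((2 * Real.pi * f (2 * Real.pi * w) : ℝ) : ℂ) := by
  rw [Real.fourier_real_eq_integral_exp_smul]
  unfold tent
  rw [tent_fourier w hw]
  congr 1
  have hπ := Real.pi_ne_zero
  rw [f, if_neg (by positivity)]
  rw [show 2 * Real.pi * w / 2 = Real.pi * w by ring]
  field_simp

open FourierTransform in
theorem fourier_tent_ae : (𝓕 tent) =ᵐ[volume]
    fun w : ℝ => ((2 * Real.pi * f (2 * Real.pi * w) : ℝ) : ℂ) := by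
  filter_upwards [compl_mem_ae_iff.2 (measure_singleton (μ := volume) (0:ℝ))] with w hw
  exact fourier_tent w hw

open FourierTransform in
theorem fhat_eq (ξ : ℝ) : fhat ξ = tent (2 * Real.pi * ξ) := by
  have hint : Integrable (𝓕 tent) := by
    refine Integrable.congr ?_ fourier_tent_ae.symm
    exact ((f_integrable.comp_mul_left' (by positivity)).const_mul _).ofReal
  have hinv := congrFun (tent_cont.fourierInv_fourier_eq tent_integrable hint) (-(2 * Real.pi * ξ))
  have : tent (2 * Real.pi * ξ) = tent (-(2 * Real.pi * ξ)) := by simp [tent]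
  rw [this, ← hinv, Real.fourierInv_eq']
  have h2 : ∫ v : ℝ, Complex.exp (↑(2 * Real.pi * inner ℝ v (-(2 * Real.pi * ξ))) * Complex.I) •
      𝓕 tent v = ∫ v : ℝ, (2 * Real.pi : ℝ) • (fun u : ℝ =>
        (f u : ℂ) * Complex.exp (-(2 * Real.pi * Complex.I * u * ξ))) (2 * Real.pi * v) := by
    apply integral_congr_ae
    filter_upwards [fourier_tent_ae] with v hv
    rw [hv]
    have hi : inner ℝ v (-(2 * Real.pi * ξ)) = -(2 * Real.pi * ξ) * v := by
      simp
    simp only [smul_eq_mul, Complex.real_smul, hi]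
    push_cast
    rw [mul_comm, mul_assoc]
    congr 3
    ring_nf
  rw [h2, integral_smul, Measure.integral_comp_mul_left (fun u : ℝ =>
        (f u : ℂ) * Complex.exp (-(2 * Real.pi * Complex.I * u * ξ))) (2 * Real.pi), smul_smul,
    abs_of_pos (by positivity), mul_inv_cancel₀ (by positivity), one_smul]
  rfl

theorem term_eq (c : ℕ → ℝ) (n : ℕ) :
    term c n = ((c n / Real.sqrt n : ℝ) : ℂ) * tent (Real.log n) := by
  have hπ := Real.pi_ne_zero
  rw [term, fhat_eq]
  congr 2
  field_simp

theorem term_zero (c : ℕ → ℝ) (n : ℕ) (hn : 3 ≤ n) : term c n = 0 := by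
  have h : 1 ≤ Real.log n := by
    rw [Real.le_log_iff_exp_le (by positivity)]
    have : (3:ℝ) ≤ n := by exact_mod_cast hn
    linarith [Real.exp_one_lt_d9]
  have : max 0 (1 - |Real.log n|) = 0 := max_eq_left (by
    rw [abs_of_nonneg (by linarith)]; linarith)
  rw [term_eq, tent, this]
  simp

theorem explicit_formula_sum (c : ℕ → ℝ) :
    (∀ n : ℕ, 1 ≤ n → n ≠ 1 → n ≠ 2 → term c n = 0) ∧
    Summable (fun n : ℕ => ‖term c (n + 1)‖) ∧
    ∑' n : ℕ, term c (n + 1) =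
      ((c 1 + c 2 * (1 - Real.log 2) / Real.sqrt 2 : ℝ) : ℂ) := by
  have h0 : ∀ n ∉ Finset.range 2, term c (n + 1) = 0 := by
    intro n hn
    apply term_zero
    simp at hn
    omega
  refine ⟨fun n h1 h2 h3 => term_zero c n (by omega), ?_, ?_⟩
  · exact summable_of_ne_finset_zero (s := Finset.range 2) (fun n hn => by rw [h0 n hn, norm_zero])
  · rw [tsum_eq_sum h0]
    have hl : max 0 (1 - |Real.log 2|) = 1 - Real.log 2 := by
      rw [abs_of_nonneg (Real.log_nonneg (by norm_num))]
      exact max_eq_right (by linarith [Real.log_two_lt_d9])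
    simp only [Finset.sum_range_succ, Finset.sum_range_zero, term_eq, tent]
    norm_num [hl]
    ring
end
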